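/- arXiv:2007.14304 — 2 statements merged into one kernel-verified Lean document; each statement's English description precedes it below -/
import Mathlib

section
/- In the quotient ring Z[i][X]/(X² − 2X) of the polynomial ring over the Gaussian integers by the ideal generated by X² − 2X, the residue class of X − 1 is not a square. Equivalently, there exist no Gaussian integers a, b with 2·a·(a + b) = 1 and b² = −1. -/
open Polynomial

/-!
Every class modulo `X² − 2X` has a unique representative `aX + b`, and
`(aX + b)² ≡ 2a(a + b)X + b²`. If this is `X − 1`, then `2a(a + b) = 1`, so `2` is a unit,
which is false in `ℤ[i]`.
-/

section MonicQuotient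

variable {R : Type*} [CommRing R] {f : R[X]}

lemma exists_mk_C_mul_X_add_C_eq (hf : f.Monic) (hdeg : f.natDegree = 2)
    (x : R[X] ⧸ Ideal.span {f}) :
    ∃ a b : R, Ideal.Quotient.mk (Ideal.span {f}) (C a * X + C b) = x := by
  obtain ⟨p, rfl⟩ := Ideal.Quotient.mk_surjective x
  have hlt : (p %ₘ f).natDegree < 2 :=
    hdeg ▸ natDegree_modByMonic_lt p hf (by rintro rfl; simp at hdeg)
  obtain ⟨a, b, hr⟩ := exists_eq_X_add_C_of_natDegree_le_one (Nat.le_of_lt_succ hlt)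
  refine ⟨a, b, ?_⟩
  rw [← hr, eq_comm, Ideal.Quotient.mk_eq_mk_iff_sub_mem, Ideal.mem_span_singleton]
  exact ⟨p /ₘ f, by linear_combination -modByMonic_add_div p f⟩

lemma mk_C_mul_X_add_C_inj (hf : f.Monic) (hdeg : 1 < f.natDegree) {a b c d : R} :
    Ideal.Quotient.mk (Ideal.span {f}) (C a * X + C b) =
      Ideal.Quotient.mk (Ideal.span {f}) (C c * X + C d) ↔ a = c ∧ b = d := by
  refine ⟨fun h => ?_, by rintro ⟨rfl, rfl⟩; rfl⟩
  rw [Ideal.Quotient.mk_eq_mk_iff_sub_mem, Ideal.mem_span_singleton] at h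
  have hsub : C a * X + C b - (C c * X + C d) = C (a - c) * X + C (b - d) := by
    simp only [C_sub]
    ring
  have hzero : C (a - c) * X + C (b - d) = 0 := by
    by_contra hne
    exact hf.not_dvd_of_natDegree_lt hne (natDegree_linear_le.trans_lt hdeg) (hsub ▸ h)
  have hX : a - c = 0 := by simpa using congrArg (coeff · 1) hzero
  have hC : b - d = 0 := by simpa using congrArg (coeff · 0) hzero
  exact ⟨sub_eq_zero.mp hX, sub_eq_zero.mp hC⟩

end MonicQuotient

section XSqSubTwoMulX

variable {R : Type*} [CommRing R]

lemma monic_X_sq_sub_two_mul_X : ((X : R[X]) ^ 2 - 2 * X).Monic := by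
  monicity!

lemma natDegree_X_sq_sub_two_mul_X [Nontrivial R] : ((X : R[X]) ^ 2 - 2 * X).natDegree = 2 := by
  compute_degree!

lemma mk_C_mul_X_add_C_sq (a b : R) :
    Ideal.Quotient.mk (Ideal.span {(X : R[X]) ^ 2 - 2 * X}) (C a * X + C b) ^ 2 =
      Ideal.Quotient.mk (Ideal.span {(X : R[X]) ^ 2 - 2 * X})
        (C (2 * a * (a + b)) * X + C (b ^ 2)) := by
  rw [← map_pow, Ideal.Quotient.mk_eq_mk_iff_sub_mem, Ideal.mem_span_singleton]
  refine ⟨C (a ^ 2), ?_⟩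
  simp only [C_mul, C_add, C_pow, C_ofNat]
  ring

lemma isSquare_mk_C_mul_X_add_C_iff {c d : R} :
    IsSquare (Ideal.Quotient.mk (Ideal.span {(X : R[X]) ^ 2 - 2 * X}) (C c * X + C d)) ↔
      ∃ a b : R, 2 * a * (a + b) = c ∧ b ^ 2 = d := by
  rw [isSquare_iff_exists_sq]
  constructor
  · rintro ⟨y, hy⟩
    rcases subsingleton_or_nontrivial R with _ | _
    · exact ⟨0, 0, Subsingleton.elim _ _, Subsingleton.elim _ _⟩
    have hmonic := monic_X_sq_sub_two_mul_X (R := R)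
    have hdeg := natDegree_X_sq_sub_two_mul_X (R := R)
    obtain ⟨a, b, rfl⟩ := exists_mk_C_mul_X_add_C_eq hmonic hdeg y
    rw [mk_C_mul_X_add_C_sq, mk_C_mul_X_add_C_inj hmonic (by lia)] at hy
    exact ⟨a, b, hy.1.symm, hy.2.symm⟩
  · rintro ⟨a, b, rfl, rfl⟩
    exact ⟨_, (mk_C_mul_X_add_C_sq a b).symm⟩

lemma isSquare_mk_X_sub_one_iff :
    IsSquare (Ideal.Quotient.mk (Ideal.span {(X : R[X]) ^ 2 - 2 * X}) (X - 1)) ↔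
      ∃ a b : R, 2 * a * (a + b) = 1 ∧ b ^ 2 = -1 := by
  have hX : (X : R[X]) - 1 = C 1 * X + C (-1) := by simp [sub_eq_add_neg]
  rw [hX, isSquare_mk_C_mul_X_add_C_iff]

theorem X_sub_one_not_square_in_gaussian_quotient_general (h2 : ¬ IsUnit (2 : R)) :
    ¬ IsSquare (Ideal.Quotient.mk (Ideal.span {(X : R[X]) ^ 2 - 2 * X}) (X - 1)) ∧
    ¬ ∃ a b : R, 2 * a * (a + b) = 1 ∧ b ^ 2 = -1 := by
  rw [isSquare_mk_X_sub_one_iff, and_self]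
  rintro ⟨a, b, hab, -⟩
  exact h2 (.of_mul_eq_one (a * (a + b)) (by rw [← mul_assoc, hab]))

end XSqSubTwoMulX

lemma isUnit_intCast_zsqrtd_iff {d n : ℤ} : IsUnit (n : ℤ√d) ↔ IsUnit n := by
  simp [isUnit_iff_dvd_one, Zsqrtd.intCast_dvd]

lemma not_isUnit_two_zsqrtd {d : ℤ} : ¬ IsUnit (2 : ℤ√d) := by
  rw [← Int.cast_two, isUnit_intCast_zsqrtd_iff]
  decide

/-- In the quotient ring `ℤ[i][X]/(X² − 2X)`, the residue class of `X − 1` is not a square;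
equivalently, there are no Gaussian integers `a`, `b` with `2·a·(a+b) = 1` and `b² = −1`. -/
theorem X_sub_one_not_square_in_gaussian_quotient :
    ¬ IsSquare ((Ideal.Quotient.mk
        (Ideal.span {(X : Polynomial GaussianInt) ^ 2 - 2 * X})) (X - 1)) ∧
    ¬ ∃ a b : GaussianInt, 2 * a * (a + b) = 1 ∧ b ^ 2 = -1 :=
  X_sub_one_not_square_in_gaussian_quotient_general not_isUnit_two_zsqrtd
end

section
/- Let A be a torsion-free abelian group (i.e. n • a = 0 with n a nonzero integer implies a = 0) and let C be an abelian group satisfying 2 • c = 0 for every c ∈ C. Then Ext¹_Z(A, C) = 0; that is, the first Ext group of A with coefficients in C, computed in the abelian category of Z-modules, is trivial (equivalently, every short exact sequence of abelian groups 0 → C → E → A → 0 splits). -/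
open CategoryTheory Limits

/-! Multiplication by `r` on `Ext¹(M, N)` is zero when `r` kills `N`. If `r` is `M`-regular, it is
also surjective, because its cokernel embeds into `Ext²(M ⧸ rM, N)`. Over a ring whose ideals are
projective this group vanishes: by Baer's criterion quotients of injective modules are injective,
so `N` has injective dimension at most one. -/

universe u v

section LinearAbelian

variable {R : Type*} [Ring R] {C : Type*} [Category* C] [Abelian C] [Linear R C] [HasExt C]

theorem subsingleton_ext_of_mono_smul_id_of_smul_id_eq_zero {X Y : C} (r : R) [Mono (r • 𝟙 X)]
    (hY : r • 𝟙 Y = 0) (n : ℕ) [Subsingleton (Abelian.Ext (cokernel (r • 𝟙 X)) Y (n + 1))] :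
    Subsingleton (Abelian.Ext X Y n) := by
  have smul_eq_zero (x : Abelian.Ext X Y n) : r • x = 0 := by
    rw [Abelian.Ext.smul_eq_comp_mk₀, hY, Abelian.Ext.mk₀_zero, Abelian.Ext.comp_zero]
  have smul_surjective (x : Abelian.Ext X Y n) : ∃ y : Abelian.Ext X Y n, r • y = x := by
    have hS : (ShortComplex.mk _ _ (cokernel.condition (r • 𝟙 X))).ShortExact :=
      { exact := ShortComplex.exact_cokernel _ }
    obtain ⟨y, hy⟩ := Abelian.Ext.contravariant_sequence_exact₁ hS Y x (add_comm 1 n)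
      (Subsingleton.elim _ _)
    refine ⟨y, ?_⟩
    rwa [Abelian.Ext.mk₀_smul, Abelian.Ext.smul_comp, Abelian.Ext.mk₀_id_comp] at hy
  refine subsingleton_of_forall_eq 0 fun x ↦ ?_
  obtain ⟨y, rfl⟩ := smul_surjective x
  exact smul_eq_zero y

variable (R) in
theorem isZero_ext_succ_of_subsingleton_abelianExt [EnoughProjectives C] (X Y : C) (n : ℕ)
    [Subsingleton (Abelian.Ext X Y (n + 1))] :
    IsZero (((Ext R C (n + 1)).obj (Opposite.op X)).obj Y) := by
  let P := projectiveResolution X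
  refine IsZero.of_iso ?_ (P.isoExt (n + 1) Y)
  rw [← HomologicalComplex.exactAt_iff_isZero_homology,
    HomologicalComplex.exactAt_iff' _ n (n + 1) (n + 2) (by simp) (by simp),
    ShortComplex.moduleCat_exact_iff]
  intro f hf
  exact (P.extMk_eq_zero_iff f (n + 2) rfl hf n rfl).1 (Subsingleton.elim _ _)

end LinearAbelian

section Hereditary

variable {R : Type u} [Ring R]

theorem baer_of_surjective_of_projective_ideals (hR : ∀ I : Ideal R, Module.Projective R I)
    {Q Q' : Type*} [AddCommGroup Q] [Module R Q] [AddCommGroup Q'] [Module R Q']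
    (hQ : Module.Baer R Q) (f : Q →ₗ[R] Q') (hf : Function.Surjective f) : Module.Baer R Q' := by
  intro I g
  have := hR I
  obtain ⟨lift, hlift⟩ := Module.projective_lifting_property f g hf
  obtain ⟨extension, hextension⟩ := hQ I lift
  refine ⟨f ∘ₗ extension, fun x hx ↦ ?_⟩
  rw [LinearMap.comp_apply, hextension x hx, ← hlift, LinearMap.comp_apply]

variable [Small.{v} R]

theorem injective_of_epi_of_projective_ideals (hR : ∀ I : Ideal R, Module.Projective R I)
    {Q Q' : ModuleCat.{v} R} [Injective Q] (f : Q ⟶ Q') [Epi f] : Injective Q' := by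
  have hQ : Module.Baer R Q :=
    Module.Baer.of_injective (Module.injective_module_of_injective_object R Q)
  have : Module.Injective R Q' :=
    (baer_of_surjective_of_projective_ideals hR hQ f.hom
      ((ModuleCat.epi_iff_surjective f).1 inferInstance)).injective
  exact Module.injective_object_of_injective_module R Q'

theorem hasInjectiveDimensionLE_one_of_projective_ideals
    (hR : ∀ I : Ideal R, Module.Projective R I) (N : ModuleCat.{v} R) :
    HasInjectiveDimensionLE N 1 := by
  have hS : (ShortComplex.mk _ _ (cokernel.condition (Injective.ι N))).ShortExact :=
    { exact := ShortComplex.exact_cokernel _ }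
  have : Injective (cokernel (Injective.ι N)) :=
    injective_of_epi_of_projective_ideals hR (cokernel.π _)
  exact (hS.hasInjectiveDimensionLT_X₃_iff 0 inferInstance).1 inferInstance

end Hereditary

theorem ext_one_eq_zero_of_torsionFree_of_two_torsion_general {R : Type u} [CommRing R]
    [Small.{v} R] (hR : ∀ I : Ideal R, Module.Projective R I) {M N : ModuleCat.{v} R} {r : R}
    (hM : IsSMulRegular M r) (hN : ∀ y : N, r • y = 0) :
    IsZero (((Ext R (ModuleCat.{v} R) 1).obj (Opposite.op M)).obj N) := by
  have : Mono (r • 𝟙 M) := (ModuleCat.mono_iff_injective _).2 hM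
  have smul_id_eq_zero : r • 𝟙 N = 0 := ModuleCat.hom_ext (LinearMap.ext hN)
  have := hasInjectiveDimensionLE_one_of_projective_ideals hR N
  have := HasInjectiveDimensionLT.subsingleton N 2 2 le_rfl (cokernel (r • 𝟙 M))
  have := subsingleton_ext_of_mono_smul_id_of_smul_id_eq_zero r (X := M) smul_id_eq_zero 1
  exact isZero_ext_succ_of_subsingleton_abelianExt R M N 0

/-- Let `A` be a torsion-free abelian group and `C` an abelian group with `2 • c = 0`
for all `c`. Then `Ext¹_ℤ(A, C) = 0`. -/
theorem ext_one_eq_zero_of_torsionFree_of_two_torsion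
    (A C : Type) [AddCommGroup A] [AddCommGroup C]
    (hA : ∀ (n : ℤ) (a : A), n ≠ 0 → n • a = 0 → a = 0)
    (hC : ∀ c : C, (2 : ℤ) • c = 0) :
    IsZero (((Ext ℤ (ModuleCat ℤ) 1).obj
        (Opposite.op (ModuleCat.of ℤ A))).obj (ModuleCat.of ℤ C)) :=
  ext_one_eq_zero_of_torsionFree_of_two_torsion_general (M := ModuleCat.of ℤ A)
    (N := ModuleCat.of ℤ C) (fun _ ↦ inferInstance)
    (IsSMulRegular.of_right_eq_zero_of_smul fun a : A ↦ hA 2 a two_ne_zero) hC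
end
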